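/- Let 0 < s ≤ 1, p ∈ [1,∞), ℓ ∈ ℝ. Let ε_n ∈ (0,1] with ε_n → 0, and for each n let f_n : ε_nℤ² → ℝ satisfy M := sup_n ‖f_n‖_{W^{s,p}_ℓ(ε_nℤ²)} < ∞. Suppose E^{ε_n} f_n → f in L^p_ℓ(ℝ²). Then there is a constant C > 0, depending only on s, p, ℓ, such that ‖f‖_{L^p_ℓ(ℝ²)} + sup{ |h|^{−s} ‖f(·+h) − f‖_{L^p_ℓ(ℝ²)} : h ∈ ℝ², 0 < |h| ≤ 1 } ≤ C·M; in particular f belongs to the weighted Besov space B^s_{p,∞,ℓ}(ℝ²). -/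

import Mathlib

open MeasureTheory
open scoped ENNReal

/-- The polynomial weight `ρ_ℓ(y) = (1+|y|²)^{-ℓ/2}` on `ℝ²`. -/
noncomputable def rho2 (ℓ : ℝ) (y : ℝ × ℝ) : ℝ := (1 + y.1 ^ 2 + y.2 ^ 2) ^ (-ℓ / 2)

/-- The lattice point `(εn₁, εn₂) ∈ εℤ² ⊂ ℝ²` indexed by `n ∈ ℤ²`. -/
noncomputable def pt (ε : ℝ) (n : ℤ × ℤ) : ℝ × ℝ := (ε * (n.1 : ℝ), ε * (n.2 : ℝ))

/-- The square `Q_ε(z) = (z₁-ε/2, z₁+ε/2] × (z₂-ε/2, z₂+ε/2]`. -/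
def Qeps (ε : ℝ) (z : ℝ × ℝ) : Set (ℝ × ℝ) :=
  Set.Ioc (z.1 - ε / 2) (z.1 + ε / 2) ×ˢ Set.Ioc (z.2 - ε / 2) (z.2 + ε / 2)

/-- The discretization operator `D^ε f(z) = ε⁻² ∫_{Q_ε(z)} f(x) dx`. -/
noncomputable def Deps (ε : ℝ) (f : ℝ × ℝ → ℝ) (n : ℤ × ℤ) : ℝ :=
  (ε ^ 2)⁻¹ * ∫ x in Qeps ε (pt ε n), f x

/-- The index of the cell `Q_ε(z)` containing `t` in one coordinate:
`t ∈ (εn - ε/2, εn + ε/2]` iff `n = ⌈t/ε - 1/2⌉`. -/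
noncomputable def cellIdx (ε t : ℝ) : ℤ := ⌈t / ε - 1 / 2⌉

/-- The extension operator `E^ε`, producing the piecewise constant function with
`E^ε f = f(z)` on `Q_ε(z)`. -/
noncomputable def Eeps (ε : ℝ) (f : ℤ × ℤ → ℝ) (x : ℝ × ℝ) : ℝ :=
  f (cellIdx ε x.1, cellIdx ε x.2)

/-- The weighted norm `‖g‖_{L^p_ℓ(ℝ²)} = (∫_{ℝ²} |ρ_ℓ(x) g(x)|^p dx)^{1/p}`,
valued in `ℝ≥0∞`. -/
noncomputable def lpNormR2 (p ℓ : ℝ) (g : ℝ × ℝ → ℝ) : ℝ≥0∞ :=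
  (∫⁻ x : ℝ × ℝ, ENNReal.ofReal (|rho2 ℓ x * g x| ^ p)) ^ (1 / p)

/-- The weighted lattice norm `‖f‖_{L^p_ℓ(εℤ²)} = (ε² Σ_{z∈εℤ²} |ρ_ℓ(z) f(z)|^p)^{1/p}`,
valued in `ℝ≥0∞`. -/
noncomputable def lpNormLat (p ℓ ε : ℝ) (f : ℤ × ℤ → ℝ) : ℝ≥0∞ :=
  (ENNReal.ofReal (ε ^ 2) *
    ∑' n : ℤ × ℤ, ENNReal.ofReal (|rho2 ℓ (pt ε n) * f n| ^ p)) ^ (1 / p)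

/-- The Euclidean length of a point of `ℝ²`. -/
noncomputable def en2 (y : ℝ × ℝ) : ℝ := Real.sqrt (y.1 ^ 2 + y.2 ^ 2)

/-- The weighted lattice `L^p_ℓ` norm of the difference `f(·+k) − f`. -/
noncomputable def latDiffNorm (p ℓ ε : ℝ) (f : ℤ × ℤ → ℝ) (k : ℤ × ℤ) : ℝ≥0∞ :=
  (ENNReal.ofReal (ε ^ 2) *
    ∑' n : ℤ × ℤ, ENNReal.ofReal (rho2 ℓ (pt ε n) ^ p * |f (n + k) - f n| ^ p)) ^ (1 / p)

/-- The lattice fractional Sobolev norm `‖f‖_{W^{s,p}_ℓ(εℤ²)} = ‖f‖_{L^p_ℓ(εℤ²)} +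
sup{ |k|^{-s} ‖f(·+k) − f‖_{L^p_ℓ(εℤ²)} : k ∈ εℤ², 0 < |k| ≤ 1 }`. -/
noncomputable def latWNorm (s p ℓ ε : ℝ) (f : ℤ × ℤ → ℝ) : ℝ≥0∞ :=
  lpNormLat p ℓ ε f +
    ⨆ (k : ℤ × ℤ) (_ : 0 < en2 (pt ε k) ∧ en2 (pt ε k) ≤ 1),
      ENNReal.ofReal (en2 (pt ε k) ^ (-s)) * latDiffNorm p ℓ ε f k

/-- The difference-quotient norm of the weighted Besov space `B^s_{p,∞,ℓ}(ℝ²)`: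
`‖g‖_{L^p_ℓ} + sup{ |h|^{-s} ‖g(·+h) − g‖_{L^p_ℓ} : h ∈ ℝ², 0 < |h| ≤ 1 }`. -/
noncomputable def besovDiffNormR2 (s p ℓ : ℝ) (g : ℝ × ℝ → ℝ) : ℝ≥0∞ :=
  lpNormR2 p ℓ g +
    ⨆ (h : ℝ × ℝ) (_ : 0 < en2 h ∧ en2 h ≤ 1),
      ENNReal.ofReal (en2 h ^ (-s)) * lpNormR2 p ℓ (fun x => g (x + h) - g x)

/-!
Two real numbers within a factor `c` of each other have `s`-th powers within a factor `c ^ |s|`; so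
`ρ_ℓ` varies by a bounded factor over unit distances, and both `E^ε` and translations by `|h| ≤ 1`
are bounded on the weighted spaces. A translation by `h` moves `ε`-cells by one of at most four
lattice vectors `k`, each comparable to `h` once `4ε ≤ |h|`; hence the difference of `E^ε f` along
`h` is controlled by the lattice differences of `f` along those `k`. This requires `|k| ≤ 1`, which
holds if `|h| ≤ 1/2`; norms pass to the limit, and the remaining `h` are reached by translating
twice by `h/2`.
-/

open Filter
open scoped NNReal Topology

section Preliminaries

lemma rpow_le_rpow_abs_mul_rpow {a b c : ℝ} (ha : 0 < a) (hb : 0 < b) (hab : a ≤ c * b)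
    (hba : b ≤ c * a) (s : ℝ) : a ^ s ≤ c ^ |s| * b ^ s := by
  have hc : 0 < c := pos_of_mul_pos_left (ha.trans_le hab) hb.le
  rcases le_total 0 s with hs | hs
  · rw [abs_of_nonneg hs, ← Real.mul_rpow hc.le hb.le]
    exact Real.rpow_le_rpow ha.le hab hs
  · rw [abs_of_nonpos hs, Real.rpow_neg hc.le, ← div_eq_inv_mul, le_div_iff₀' (by positivity),
      ← Real.mul_rpow hc.le ha.le]
    exact Real.rpow_le_rpow_of_nonpos hb hba hs

lemma ofReal_rpow_le_mul_ofReal_rpow {a b : ℝ} {c : ℝ≥0} (ha : 0 < a) (hb : 0 < b)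
    (hab : a ≤ c * b) (hba : b ≤ c * a) (s : ℝ) :
    ENNReal.ofReal (a ^ s) ≤ ↑(c ^ |s|) * ENNReal.ofReal (b ^ s) := by
  rw [← ENNReal.ofReal_coe_nnreal, ← ENNReal.ofReal_mul NNReal.zero_le_coe]
  exact ENNReal.ofReal_le_ofReal (rpow_le_rpow_abs_mul_rpow ha hb hab hba s)

lemma ofReal_rpow_neg_mul_le_iff {t : ℝ} (ht : 0 < t) (s : ℝ) {X Y : ℝ≥0∞} :
    ENNReal.ofReal (t ^ (-s)) * X ≤ Y ↔ X ≤ ENNReal.ofReal (t ^ s) * Y := by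
  have hts : 0 < t ^ s := by positivity
  rw [Real.rpow_neg ht.le, ENNReal.ofReal_inv_of_pos hts,
    ENNReal.inv_mul_le_iff (by simpa using hts) ENNReal.ofReal_ne_top]

variable {α ι : Type*} [MeasurableSpace α] {μ : Measure α}

lemma eLpNorm_ofReal_eq_lintegral {p : ℝ} (hp : 0 < p) (u : α → ℝ) :
    eLpNorm u (ENNReal.ofReal p) μ = (∫⁻ x, ENNReal.ofReal (|u x| ^ p) ∂μ) ^ (1 / p) := by
  rw [eLpNorm_eq_lintegral_rpow_enorm_toReal (by simpa using hp) ENNReal.ofReal_ne_top,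
    ENNReal.toReal_ofReal hp.le]
  simp only [Real.enorm_eq_ofReal_abs, ENNReal.ofReal_rpow_of_nonneg (abs_nonneg _) hp.le]

lemma lintegral_comp_of_measure_preimage_singleton_eq [MeasurableSpace ι] [Countable ι]
    [MeasurableSingletonClass ι] {π : α → ι} (hπ : Measurable π) {c : ℝ≥0∞}
    (hc : ∀ i, μ (π ⁻¹' {i}) = c) (F : ι → ℝ≥0∞) : ∫⁻ x, F (π x) ∂μ = c * ∑' i, F i := by
  rw [← lintegral_map (measurable_of_countable F) hπ, lintegral_countable', ← ENNReal.tsum_mul_left]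
  refine tsum_congr fun i => ?_
  rw [Measure.map_apply hπ (measurableSet_singleton i), hc, mul_comm]

variable {G : Type*} [AddCommGroup G] [MeasurableSpace G] [MeasurableAdd G] {ν : Measure G}
  [ν.IsAddRightInvariant] {g : G → ℝ}

lemma aemeasurable_comp_add_right (hg : AEMeasurable g ν) (h : G) :
    AEMeasurable (fun x => g (x + h)) ν :=
  hg.comp_quasiMeasurePreserving (measurePreserving_add_right ν h).quasiMeasurePreserving

lemma aemeasurable_fwdDiff (hg : AEMeasurable g ν) (h : G) : AEMeasurable (fwdDiff h g) ν :=
  (aemeasurable_comp_add_right hg h).sub hg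

end Preliminaries

section Euclidean

lemma en2_eq_norm (y : ℝ × ℝ) : en2 y = ‖WithLp.toLp 2 y‖ := by
  simp [en2, WithLp.prod_norm_eq_of_L2]

lemma abs_en2_sub_en2_le (x y : ℝ × ℝ) : |en2 x - en2 y| ≤ en2 (x - y) := by
  simpa only [en2_eq_norm, WithLp.toLp_sub] using abs_norm_sub_norm_le _ _

lemma en2_smul (c : ℝ) (y : ℝ × ℝ) : en2 (c • y) = |c| * en2 y := by
  rw [en2_eq_norm, en2_eq_norm, WithLp.toLp_smul, norm_smul, Real.norm_eq_abs]

lemma norm_le_en2 (y : ℝ × ℝ) : ‖y‖ ≤ en2 y :=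
  max_le (Real.abs_le_sqrt (by linarith [sq_nonneg y.2]))
    (Real.abs_le_sqrt (by linarith [sq_nonneg y.1]))

lemma en2_le_two_mul_norm (y : ℝ × ℝ) : en2 y ≤ 2 * ‖y‖ := by
  have h₁ : y.1 ^ 2 ≤ ‖y‖ ^ 2 := sq_le_sq' (neg_le_of_abs_le (norm_fst_le y))
    (le_of_abs_le (norm_fst_le y))
  have h₂ : y.2 ^ 2 ≤ ‖y‖ ^ 2 := sq_le_sq' (neg_le_of_abs_le (norm_snd_le y))
    (le_of_abs_le (norm_snd_le y))
  exact Real.sqrt_le_iff.2 ⟨by positivity, by nlinarith [sq_nonneg ‖y‖]⟩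

end Euclidean

section Weight

/-- A bound for the ratio of the values of `rho2 ℓ` at two points whose sup-norm distance is at
most `1`; the base `5` bounds the corresponding ratio of `1 + |y|²`. -/
noncomputable def weightRatio (ℓ : ℝ) : ℝ≥0 := 5 ^ |-ℓ / 2|

lemma rho2_pos (ℓ : ℝ) (y : ℝ × ℝ) : 0 < rho2 ℓ y := by
  unfold rho2
  positivity

lemma measurable_rho2 (ℓ : ℝ) : Measurable (rho2 ℓ) := by
  unfold rho2
  fun_prop

lemma one_add_sq_le_five_mul {x y : ℝ × ℝ} (hxy : dist x y ≤ 1) :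
    1 + x.1 ^ 2 + x.2 ^ 2 ≤ 5 * (1 + y.1 ^ 2 + y.2 ^ 2) := by
  have h₁ : |x.1 - y.1| ≤ 1 := (le_max_left _ _).trans hxy
  have h₂ : |x.2 - y.2| ≤ 1 := (le_max_right _ _).trans hxy
  rw [← sq_le_one_iff_abs_le_one] at h₁ h₂
  nlinarith [sq_nonneg (x.1 - 2 * y.1), sq_nonneg (x.2 - 2 * y.2)]

lemma rho2_le_weightRatio_mul (ℓ : ℝ) {x y : ℝ × ℝ} (hxy : dist x y ≤ 1) :
    rho2 ℓ x ≤ weightRatio ℓ * rho2 ℓ y := by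
  simpa [weightRatio, rho2] using rpow_le_rpow_abs_mul_rpow (by positivity) (by positivity)
    (one_add_sq_le_five_mul hxy) (one_add_sq_le_five_mul (dist_comm x y ▸ hxy)) (-ℓ / 2)

lemma nnnorm_rho2_mul_le (ℓ : ℝ) {x y : ℝ × ℝ} (hxy : dist x y ≤ 1) (u : ℝ) :
    ‖rho2 ℓ x * u‖₊ ≤ weightRatio ℓ * ‖rho2 ℓ y * u‖₊ := by
  rw [nnnorm_mul, nnnorm_mul, ← mul_assoc]
  gcongr
  rw [← NNReal.coe_le_coe]
  simpa [abs_of_pos (rho2_pos ℓ _)] using rho2_le_weightRatio_mul ℓ hxy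

end Weight

section WeightedLp

variable {p : ℝ} (ℓ : ℝ) {g : ℝ × ℝ → ℝ} {h : ℝ × ℝ}

lemma lpNormR2_eq_eLpNorm (hp : 0 < p) (g : ℝ × ℝ → ℝ) :
    lpNormR2 p ℓ g = eLpNorm (fun x => rho2 ℓ x * g x) (ENNReal.ofReal p) volume :=
  (eLpNorm_ofReal_eq_lintegral hp _).symm

lemma aestronglyMeasurable_rho2_mul (hg : AEMeasurable g) :
    AEStronglyMeasurable (fun x => rho2 ℓ x * g x) volume :=
  ((measurable_rho2 ℓ).aemeasurable.mul hg).aestronglyMeasurable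

lemma lpNormR2_le_sum (hp : 1 ≤ p) {ι : Type*} {S : Finset ι} {u : ι → ℝ × ℝ → ℝ}
    (hu : ∀ i ∈ S, AEMeasurable (u i)) (hg : ∀ x, |g x| ≤ ∑ i ∈ S, |u i x|) :
    lpNormR2 p ℓ g ≤ ∑ i ∈ S, lpNormR2 p ℓ (u i) := by
  simp only [lpNormR2_eq_eLpNorm ℓ (zero_lt_one.trans_le hp)]
  calc eLpNorm (fun x => rho2 ℓ x * g x) (ENNReal.ofReal p) volume
      ≤ eLpNorm (∑ i ∈ S, fun x => ‖rho2 ℓ x * u i x‖) (ENNReal.ofReal p) volume := by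
        refine eLpNorm_mono_real fun x => ?_
        simp only [Finset.sum_apply, norm_mul, ← Finset.mul_sum]
        exact mul_le_mul_of_nonneg_left (hg x) (norm_nonneg _)
    _ ≤ ∑ i ∈ S, eLpNorm (fun x => ‖rho2 ℓ x * u i x‖) (ENNReal.ofReal p) volume :=
        eLpNorm_sum_le (fun i hi => (aestronglyMeasurable_rho2_mul ℓ (hu i hi)).norm)
          (by simpa using hp)
    _ = ∑ i ∈ S, eLpNorm (fun x => rho2 ℓ x * u i x) (ENNReal.ofReal p) volume := by
        simp only [eLpNorm_norm]

lemma lpNormR2_le_add (hp : 1 ≤ p) {u v : ℝ × ℝ → ℝ} (hu : AEMeasurable u) (hv : AEMeasurable v)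
    (hg : ∀ x, |g x| ≤ |u x| + |v x|) : lpNormR2 p ℓ g ≤ lpNormR2 p ℓ u + lpNormR2 p ℓ v := by
  simpa using lpNormR2_le_sum ℓ hp (S := Finset.univ) (u := ![u, v])
    (by simp [Fin.forall_fin_two, hu, hv]) (by simpa using hg)

lemma lpNormR2_le_of_tendsto (hp : 1 ≤ p) {ι : Type*} {l : Filter ι} [l.NeBot]
    {u : ι → ℝ × ℝ → ℝ} (hu : ∀ i, AEMeasurable (u i)) (hg : AEMeasurable g)
    (hlim : Tendsto (fun i => lpNormR2 p ℓ (u i - g)) l (𝓝 0)) {B : ℝ≥0∞}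
    (hB : ∀ᶠ i in l, lpNormR2 p ℓ (u i) ≤ B) : lpNormR2 p ℓ g ≤ B := by
  refine ge_of_tendsto (by simpa using hlim.add_const B) (hB.mono fun i hi => ?_)
  refine (lpNormR2_le_add ℓ hp ((hu i).sub hg) (hu i) fun x => ?_).trans (by gcongr)
  rw [Pi.sub_apply, abs_sub_comm]
  simpa using abs_add_le (g x - u i x) (u i x)

lemma lpNormR2_comp_add_right_le (hp : 0 < p) (hg : AEMeasurable g) (hh : ‖h‖ ≤ 1) :
    lpNormR2 p ℓ (fun x => g (x + h)) ≤ weightRatio ℓ * lpNormR2 p ℓ g := by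
  simp only [lpNormR2_eq_eLpNorm ℓ hp]
  rw [← eLpNorm_comp_measurePreserving (aestronglyMeasurable_rho2_mul ℓ hg)
    (measurePreserving_add_right volume h)]
  exact eLpNorm_le_nnreal_smul_eLpNorm_of_ae_le_mul
    (.of_forall fun x => nnnorm_rho2_mul_le ℓ (by simpa using hh) _) _

lemma lpNormR2_le_of_abs_le_abs_add_abs_translate (hp : 1 ≤ p) (hg : AEMeasurable g)
    (hh : ‖h‖ ≤ 1) {u : ℝ × ℝ → ℝ} (hu : ∀ x, |u x| ≤ |g (x + h)| + |g x|) :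
    lpNormR2 p ℓ u ≤ (weightRatio ℓ + 1) * lpNormR2 p ℓ g :=
  calc lpNormR2 p ℓ u ≤ lpNormR2 p ℓ (fun x => g (x + h)) + lpNormR2 p ℓ g :=
        lpNormR2_le_add ℓ hp (aemeasurable_comp_add_right hg h) hg hu
    _ ≤ weightRatio ℓ * lpNormR2 p ℓ g + lpNormR2 p ℓ g := by
        gcongr
        exact lpNormR2_comp_add_right_le ℓ (zero_lt_one.trans_le hp) hg hh
    _ = (weightRatio ℓ + 1) * lpNormR2 p ℓ g := by ring

lemma lpNormR2_fwdDiff_le (hp : 1 ≤ p) (hg : AEMeasurable g) (hh : ‖h‖ ≤ 1) :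
    lpNormR2 p ℓ (fwdDiff h g) ≤ (weightRatio ℓ + 1) * lpNormR2 p ℓ g :=
  lpNormR2_le_of_abs_le_abs_add_abs_translate ℓ hp hg hh fun _ => abs_sub _ _

lemma lpNormR2_fwdDiff_add_self_le (hp : 1 ≤ p) (hg : AEMeasurable g) (hh : ‖h‖ ≤ 1) :
    lpNormR2 p ℓ (fwdDiff (h + h) g) ≤ (weightRatio ℓ + 1) * lpNormR2 p ℓ (fwdDiff h g) := by
  refine lpNormR2_le_of_abs_le_abs_add_abs_translate ℓ hp (aemeasurable_fwdDiff hg h) hh fun x => ?_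
  simpa [fwdDiff, add_assoc] using abs_add_le (fwdDiff h g (x + h)) (fwdDiff h g x)

lemma tendsto_lpNormR2_fwdDiff_sub (hp : 1 ≤ p) {ι : Type*} {l : Filter ι}
    {u : ι → ℝ × ℝ → ℝ} (hu : ∀ i, AEMeasurable (u i)) (hg : AEMeasurable g) (hh : ‖h‖ ≤ 1)
    (hlim : Tendsto (fun i => lpNormR2 p ℓ (u i - g)) l (𝓝 0)) :
    Tendsto (fun i => lpNormR2 p ℓ (fwdDiff h (u i) - fwdDiff h g)) l (𝓝 0) := by
  have hbound : ∀ i, lpNormR2 p ℓ (fwdDiff h (u i) - fwdDiff h g) ≤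
      (weightRatio ℓ + 1) * lpNormR2 p ℓ (u i - g) := fun i => by
    have hsub : fwdDiff h (u i) - fwdDiff h g = fwdDiff h (u i - g) := by
      funext x
      simp only [fwdDiff, Pi.sub_apply]
      ring
    exact hsub ▸ lpNormR2_fwdDiff_le ℓ hp ((hu i).sub hg) hh
  refine tendsto_of_tendsto_of_tendsto_of_le_of_le tendsto_const_nhds ?_ (fun _ => zero_le) hbound
  simpa using ENNReal.Tendsto.const_mul (a := weightRatio ℓ + 1) hlim (.inr (by finiteness))

end WeightedLp

section Extension

variable {p ε : ℝ} (ℓ : ℝ) {h : ℝ × ℝ}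

/-- The index `n` of the cell `Q_ε(εn)` containing `x`. -/
noncomputable def cell (ε : ℝ) (x : ℝ × ℝ) : ℤ × ℤ := (cellIdx ε x.1, cellIdx ε x.2)

/-- The lattice vectors by which the cell of a point can move when the point is translated
by `h`. -/
noncomputable def cellShifts (ε : ℝ) (h : ℝ × ℝ) : Finset (ℤ × ℤ) :=
  Finset.Icc ⌊h.1 / ε⌋ ⌈h.1 / ε⌉ ×ˢ Finset.Icc ⌊h.2 / ε⌋ ⌈h.2 / ε⌉

lemma measurable_cell (ε : ℝ) : Measurable (cell ε) := by
  unfold cell cellIdx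
  fun_prop

lemma measurable_Eeps (ε : ℝ) (f : ℤ × ℤ → ℝ) : Measurable (Eeps ε f) :=
  (measurable_of_countable f).comp (measurable_cell ε)

lemma cellIdx_eq_iff (hε : 0 < ε) {t : ℝ} {n : ℤ} :
    cellIdx ε t = n ↔ t ∈ Set.Ioc (ε * n - ε / 2) (ε * n + ε / 2) := by
  have hlo : ε * n - ε / 2 < t ↔ n - 1 < t / ε - 1 / 2 := by
    rw [lt_sub_iff_add_lt, lt_div_iff₀ hε]
    constructor <;> intro <;> linarith
  have hhi : t ≤ ε * n + ε / 2 ↔ t / ε - 1 / 2 ≤ n := by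
    rw [sub_le_iff_le_add, div_le_iff₀ hε]
    constructor <;> intro <;> linarith
  rw [cellIdx, Int.ceil_eq_iff, Set.mem_Ioc, hlo, hhi]

lemma cell_preimage_singleton (hε : 0 < ε) (n : ℤ × ℤ) : cell ε ⁻¹' {n} = Qeps ε (pt ε n) := by
  ext x
  simp only [Set.mem_preimage, Set.mem_singleton_iff, Qeps, Set.mem_prod, pt,
    ← cellIdx_eq_iff hε, cell, Prod.ext_iff]

lemma volume_Qeps (hε : 0 ≤ ε) (z : ℝ × ℝ) : volume (Qeps ε z) = ENNReal.ofReal (ε ^ 2) := by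
  rw [Qeps, Measure.volume_eq_prod, Measure.prod_prod, Real.volume_Ioc, Real.volume_Ioc,
    add_sub_sub_cancel, add_sub_sub_cancel, add_halves, ← ENNReal.ofReal_mul hε, sq]

lemma dist_pt_cell_le (hε : 0 < ε) (x : ℝ × ℝ) : dist x (pt ε (cell ε x)) ≤ ε / 2 := by
  obtain ⟨h₁, h₂⟩ : x ∈ Qeps ε (pt ε (cell ε x)) := cell_preimage_singleton hε (cell ε x) ▸ rfl
  refine max_le ?_ ?_ <;> rw [Real.dist_eq, abs_le] <;> constructor <;>
    linarith [h₁.1, h₁.2, h₂.1, h₂.2]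

lemma lpNormLat_eq_eLpNorm_Eeps (hp : 0 < p) (hε : 0 < ε) (f : ℤ × ℤ → ℝ) :
    lpNormLat p ℓ ε f =
      eLpNorm (Eeps ε fun n => rho2 ℓ (pt ε n) * f n) (ENNReal.ofReal p) volume := by
  rw [eLpNorm_ofReal_eq_lintegral hp, lpNormLat]
  congr 1
  exact (lintegral_comp_of_measure_preimage_singleton_eq (measurable_cell ε)
    (fun n => by rw [cell_preimage_singleton hε, volume_Qeps hε.le]) _).symm

lemma lpNormR2_Eeps_le (hp : 0 < p) (hε : 0 < ε) (hε₂ : ε ≤ 2) (f : ℤ × ℤ → ℝ) :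
    lpNormR2 p ℓ (Eeps ε f) ≤ weightRatio ℓ * lpNormLat p ℓ ε f := by
  rw [lpNormR2_eq_eLpNorm ℓ hp, lpNormLat_eq_eLpNorm_Eeps ℓ hp hε]
  have hdist : ∀ x, dist x (pt ε (cell ε x)) ≤ 1 := fun x =>
    (dist_pt_cell_le hε x).trans (by linarith)
  exact eLpNorm_le_nnreal_smul_eLpNorm_of_ae_le_mul
    (.of_forall fun x => nnnorm_rho2_mul_le ℓ (hdist x) (Eeps ε f x)) _

lemma cellIdx_add_sub_mem_Icc (ε t r : ℝ) :
    cellIdx ε (t + r) - cellIdx ε t ∈ Finset.Icc ⌊r / ε⌋ ⌈r / ε⌉ := by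
  rw [cellIdx, cellIdx, add_div, add_sub_right_comm, Finset.mem_Icc, le_sub_iff_add_le',
    sub_le_iff_le_add']
  refine ⟨?_, Int.ceil_add_le _ _⟩
  rw [← Int.ceil_add_intCast]
  gcongr
  exact Int.floor_le _

lemma cell_add_sub_mem_cellShifts (ε : ℝ) (x h : ℝ × ℝ) :
    cell ε (x + h) - cell ε x ∈ cellShifts ε h :=
  Finset.mem_product.2 ⟨cellIdx_add_sub_mem_Icc ε x.1 h.1, cellIdx_add_sub_mem_Icc ε x.2 h.2⟩

lemma card_Icc_floor_ceil_le_two (r : ℝ) : (Finset.Icc ⌊r⌋ ⌈r⌉).card ≤ 2 := by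
  have := Int.ceil_le_floor_add_one r
  rw [Int.card_Icc]
  lia

lemma card_cellShifts_le_four (ε : ℝ) (h : ℝ × ℝ) : (cellShifts ε h).card ≤ 4 := by
  rw [cellShifts, Finset.card_product]
  exact Nat.mul_le_mul (card_Icc_floor_ceil_le_two _) (card_Icc_floor_ceil_le_two _)

lemma abs_mul_sub_le_of_mem_Icc_floor_ceil (hε : 0 < ε) {r : ℝ} {k : ℤ}
    (hk : k ∈ Finset.Icc ⌊r / ε⌋ ⌈r / ε⌉) : |ε * k - r| ≤ ε := by
  obtain ⟨hlo, hhi⟩ := Finset.mem_Icc.1 hk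
  have hlo' : r / ε < k + 1 := Int.floor_le_iff.1 hlo
  have hhi' : k - 1 < r / ε := Int.le_ceil_iff.1 hhi
  rw [div_lt_iff₀ hε] at hlo'
  rw [lt_div_iff₀ hε] at hhi'
  rw [abs_le]
  constructor <;> linarith

lemma norm_pt_sub_le_of_mem_cellShifts (hε : 0 < ε) {k : ℤ × ℤ} (hk : k ∈ cellShifts ε h) :
    ‖pt ε k - h‖ ≤ ε := by
  obtain ⟨h₁, h₂⟩ := Finset.mem_product.1 hk
  exact max_le (abs_mul_sub_le_of_mem_Icc_floor_ceil hε h₁)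
    (abs_mul_sub_le_of_mem_Icc_floor_ceil hε h₂)

lemma abs_en2_pt_sub_en2_le_of_mem_cellShifts (hε : 0 < ε) {k : ℤ × ℤ}
    (hk : k ∈ cellShifts ε h) : |en2 (pt ε k) - en2 h| ≤ 2 * ε :=
  calc |en2 (pt ε k) - en2 h| ≤ en2 (pt ε k - h) := abs_en2_sub_en2_le _ _
    _ ≤ 2 * ‖pt ε k - h‖ := en2_le_two_mul_norm _
    _ ≤ 2 * ε := by gcongr; exact norm_pt_sub_le_of_mem_cellShifts hε hk

lemma abs_fwdDiff_Eeps_le (ε : ℝ) (f : ℤ × ℤ → ℝ) (h x : ℝ × ℝ) :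
    |fwdDiff h (Eeps ε f) x| ≤ ∑ k ∈ cellShifts ε h, |Eeps ε (fwdDiff k f) x| := by
  have hshift : fwdDiff h (Eeps ε f) x =
      Eeps ε (fwdDiff (cell ε (x + h) - cell ε x) f) x := by
    change f (cell ε (x + h)) - f (cell ε x) =
      f (cell ε x + (cell ε (x + h) - cell ε x)) - f (cell ε x)
    rw [add_sub_cancel]
  rw [hshift]
  exact Finset.single_le_sum (f := fun k => |Eeps ε (fwdDiff k f) x|) (fun _ _ => abs_nonneg _)
    (cell_add_sub_mem_cellShifts ε x h)

end Extension

section DifferenceQuotients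

variable (s : ℝ) {p : ℝ} (ℓ : ℝ) {ε : ℝ} {h : ℝ × ℝ}

lemma latDiffNorm_eq_lpNormLat_fwdDiff (p ε : ℝ) (f : ℤ × ℤ → ℝ) (k : ℤ × ℤ) :
    latDiffNorm p ℓ ε f k = lpNormLat p ℓ ε (fwdDiff k f) := by
  simp only [latDiffNorm, lpNormLat, fwdDiff, abs_mul, abs_of_pos (rho2_pos ℓ _),
    Real.mul_rpow (rho2_pos ℓ _).le (abs_nonneg _)]

lemma latDiffNorm_le_latWNorm (p : ℝ) (f : ℤ × ℤ → ℝ) {k : ℤ × ℤ} (hk₀ : 0 < en2 (pt ε k))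
    (hk₁ : en2 (pt ε k) ≤ 1) :
    latDiffNorm p ℓ ε f k ≤ ENNReal.ofReal (en2 (pt ε k) ^ s) * latWNorm s p ℓ ε f := by
  rw [← ofReal_rpow_neg_mul_le_iff hk₀]
  refine le_trans ?_ le_add_self
  exact le_iSup₂_of_le k ⟨hk₀, hk₁⟩ le_rfl

lemma latDiffNorm_le_of_mem_cellShifts (p : ℝ) (hε : 0 < ε) (hεh : 4 * ε ≤ en2 h)
    (hh : en2 h ≤ 1 / 2) (f : ℤ × ℤ → ℝ) {k : ℤ × ℤ} (hk : k ∈ cellShifts ε h) :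
    latDiffNorm p ℓ ε f k ≤
      ↑((2 : ℝ≥0) ^ |s|) * (ENNReal.ofReal (en2 h ^ s) * latWNorm s p ℓ ε f) := by
  obtain ⟨hlo, hhi⟩ := abs_le.1 (abs_en2_pt_sub_en2_le_of_mem_cellShifts hε hk)
  have hh₀ : 0 < en2 h := by linarith
  have hk₀ : 0 < en2 (pt ε k) := by linarith
  refine (latDiffNorm_le_latWNorm s ℓ p f hk₀ (by linarith)).trans ?_
  rw [← mul_assoc]
  gcongr
  exact ofReal_rpow_le_mul_ofReal_rpow hk₀ hh₀ (by norm_num; linarith) (by norm_num; linarith) s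

lemma lpNormR2_fwdDiff_Eeps_le (hp : 1 ≤ p) (hε : 0 < ε) (hεh : 4 * ε ≤ en2 h)
    (hh : en2 h ≤ 1 / 2) (f : ℤ × ℤ → ℝ) :
    lpNormR2 p ℓ (fwdDiff h (Eeps ε f)) ≤ ↑(4 * weightRatio ℓ * 2 ^ |s|) *
      (ENNReal.ofReal (en2 h ^ s) * latWNorm s p ℓ ε f) := by
  have hterm : ∀ k ∈ cellShifts ε h, lpNormR2 p ℓ (Eeps ε (fwdDiff k f)) ≤
      weightRatio ℓ * (↑((2 : ℝ≥0) ^ |s|) *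
        (ENNReal.ofReal (en2 h ^ s) * latWNorm s p ℓ ε f)) := fun k hk => by
    refine (lpNormR2_Eeps_le ℓ (zero_lt_one.trans_le hp) hε (by linarith) _).trans ?_
    rw [← latDiffNorm_eq_lpNormLat_fwdDiff]
    gcongr
    exact latDiffNorm_le_of_mem_cellShifts s ℓ p hε hεh hh f hk
  calc lpNormR2 p ℓ (fwdDiff h (Eeps ε f))
      ≤ ∑ k ∈ cellShifts ε h, lpNormR2 p ℓ (Eeps ε (fwdDiff k f)) :=
        lpNormR2_le_sum ℓ hp (fun k _ => (measurable_Eeps ε _).aemeasurable)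
          (abs_fwdDiff_Eeps_le ε f h)
    _ ≤ 4 * (weightRatio ℓ * (↑((2 : ℝ≥0) ^ |s|) *
          (ENNReal.ofReal (en2 h ^ s) * latWNorm s p ℓ ε f))) := by
        refine (Finset.sum_le_card_nsmul _ _ _ hterm).trans ?_
        rw [nsmul_eq_mul]
        gcongr
        exact_mod_cast card_cellShifts_le_four ε h
    _ = _ := by
        push_cast
        ring

end DifferenceQuotients

section Limit

variable (s : ℝ) {p : ℝ} (ℓ : ℝ) {ι : Type*} {l : Filter ι} [l.NeBot] {ε : ι → ℝ}
  {f : ι → ℤ × ℤ → ℝ} {g : ℝ × ℝ → ℝ} {M : ℝ≥0∞} {h : ℝ × ℝ}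

/-- The constant bounding the Besov norm of a limit of lattice functions by their lattice
fractional Sobolev norms. -/
noncomputable def besovConst (s ℓ : ℝ) : ℝ≥0 :=
  weightRatio ℓ + (weightRatio ℓ + 1) * (4 * weightRatio ℓ * 2 ^ |s| * 2 ^ |s|)

lemma besovConst_pos (s ℓ : ℝ) : 0 < besovConst s ℓ := by
  unfold besovConst weightRatio
  positivity

lemma lpNormR2_le_of_tendsto_Eeps (hp : 1 ≤ p) (hε : Tendsto ε l (𝓝[>] 0)) (hg : AEMeasurable g)
    (hM : ∀ᶠ i in l, latWNorm s p ℓ (ε i) (f i) ≤ M)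
    (hlim : Tendsto (fun i => lpNormR2 p ℓ (Eeps (ε i) (f i) - g)) l (𝓝 0)) :
    lpNormR2 p ℓ g ≤ weightRatio ℓ * M := by
  refine lpNormR2_le_of_tendsto ℓ hp (fun i => (measurable_Eeps _ _).aemeasurable) hg hlim ?_
  filter_upwards [hM, hε (Ioc_mem_nhdsGT two_pos)] with i hMi ⟨hε₀, hε₂⟩
  refine (lpNormR2_Eeps_le ℓ (zero_lt_one.trans_le hp) hε₀ hε₂ _).trans ?_
  gcongr
  exact le_self_add.trans hMi

lemma lpNormR2_fwdDiff_le_of_en2_le_half (hp : 1 ≤ p) (hε : Tendsto ε l (𝓝[>] 0))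
    (hg : AEMeasurable g) (hM : ∀ᶠ i in l, latWNorm s p ℓ (ε i) (f i) ≤ M)
    (hlim : Tendsto (fun i => lpNormR2 p ℓ (Eeps (ε i) (f i) - g)) l (𝓝 0))
    (hh₀ : 0 < en2 h) (hh : en2 h ≤ 1 / 2) :
    lpNormR2 p ℓ (fwdDiff h g) ≤
      ↑(4 * weightRatio ℓ * 2 ^ |s|) * (ENNReal.ofReal (en2 h ^ s) * M) := by
  have hE : ∀ i, AEMeasurable (Eeps (ε i) (f i)) := fun i => (measurable_Eeps _ _).aemeasurable
  have hnorm : ‖h‖ ≤ 1 := (norm_le_en2 h).trans (by linarith)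
  refine lpNormR2_le_of_tendsto ℓ hp (fun i => aemeasurable_fwdDiff (hE i) h)
    (aemeasurable_fwdDiff hg h) (tendsto_lpNormR2_fwdDiff_sub ℓ hp hE hg hnorm hlim) ?_
  filter_upwards [hM, hε (Ioc_mem_nhdsGT (show 0 < en2 h / 4 by positivity))]
    with i hMi ⟨hε₀, hεh⟩
  refine (lpNormR2_fwdDiff_Eeps_le s ℓ hp hε₀ (by linarith) hh _).trans ?_
  gcongr

lemma lpNormR2_fwdDiff_le_of_en2_le_one (hp : 1 ≤ p) (hε : Tendsto ε l (𝓝[>] 0))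
    (hg : AEMeasurable g) (hM : ∀ᶠ i in l, latWNorm s p ℓ (ε i) (f i) ≤ M)
    (hlim : Tendsto (fun i => lpNormR2 p ℓ (Eeps (ε i) (f i) - g)) l (𝓝 0))
    (hh₀ : 0 < en2 h) (hh : en2 h ≤ 1) :
    lpNormR2 p ℓ (fwdDiff h g) ≤
      ↑((weightRatio ℓ + 1) * (4 * weightRatio ℓ * 2 ^ |s| * 2 ^ |s|)) *
        (ENNReal.ofReal (en2 h ^ s) * M) := by
  obtain ⟨k, rfl⟩ : ∃ k : ℝ × ℝ, k + k = h := ⟨(1 / 2 : ℝ) • h, by module⟩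
  have hk : en2 (k + k) = 2 * en2 k := by rw [← two_smul ℝ k, en2_smul, abs_two]
  rw [hk] at hh₀ hh ⊢
  have hk₀ : 0 < en2 k := by linarith
  calc lpNormR2 p ℓ (fwdDiff (k + k) g)
      ≤ (weightRatio ℓ + 1) * lpNormR2 p ℓ (fwdDiff k g) :=
        lpNormR2_fwdDiff_add_self_le ℓ hp hg ((norm_le_en2 k).trans (by linarith))
    _ ≤ (weightRatio ℓ + 1) * (↑(4 * weightRatio ℓ * 2 ^ |s|) *
          (ENNReal.ofReal (en2 k ^ s) * M)) := by
        gcongr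
        exact lpNormR2_fwdDiff_le_of_en2_le_half s ℓ hp hε hg hM hlim hk₀ (by linarith)
    _ ≤ (weightRatio ℓ + 1) * (↑(4 * weightRatio ℓ * 2 ^ |s|) *
          (↑((2 : ℝ≥0) ^ |s|) * ENNReal.ofReal ((2 * en2 k) ^ s) * M)) := by
        gcongr
        exact ofReal_rpow_le_mul_ofReal_rpow hk₀ hh₀ (by norm_num; linarith) (by norm_num) s
    _ = _ := by
        push_cast
        ring

theorem stmt_10_general (hp : 1 ≤ p) (hε : Tendsto ε l (𝓝[>] 0)) (hg : AEMeasurable g)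
    (hM : ∀ᶠ i in l, latWNorm s p ℓ (ε i) (f i) ≤ M)
    (hlim : Tendsto (fun i => lpNormR2 p ℓ (Eeps (ε i) (f i) - g)) l (𝓝 0)) :
    besovDiffNormR2 s p ℓ g ≤ besovConst s ℓ * M := by
  rw [besovConst, ENNReal.coe_add, add_mul]
  refine add_le_add (lpNormR2_le_of_tendsto_Eeps s ℓ hp hε hg hM hlim)
    (iSup₂_le fun h hh => (ofReal_rpow_neg_mul_le_iff hh.1 s).2 ?_)
  rw [mul_left_comm]
  exact lpNormR2_fwdDiff_le_of_en2_le_one s ℓ hp hε hg hM hlim hh.1 hh.2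

end Limit

/-- Theorem 2.19 (first part): let `0 < s ≤ 1`, `p ∈ [1,∞)`, `ℓ ∈ ℝ`. There is a
constant `C > 0` depending only on `s, p, ℓ` such that whenever `ε_n ∈ (0,1]` with
`ε_n → 0`, `f_n : ε_nℤ² → ℝ` with `M := sup_n ‖f_n‖_{W^{s,p}_ℓ(ε_nℤ²)} < ∞`, and
`E^{ε_n} f_n → f` in `L^p_ℓ(ℝ²)`, the limit `f` satisfies
`‖f‖_{L^p_ℓ} + sup_{0<|h|≤1} |h|^{-s} ‖f(·+h) − f‖_{L^p_ℓ} ≤ C M`; in particular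
`f ∈ B^s_{p,∞,ℓ}(ℝ²)`. -/
theorem stmt_10 (s p ℓ : ℝ) (hs0 : 0 < s) (hs1 : s ≤ 1) (hp : 1 ≤ p) :
    ∃ C : ℝ, 0 < C ∧
      ∀ ε : ℕ → ℝ, (∀ n, ε n ∈ Set.Ioc (0 : ℝ) 1) →
        Filter.Tendsto ε Filter.atTop (nhds 0) →
        ∀ (f : ℕ → ℤ × ℤ → ℝ) (g : ℝ × ℝ → ℝ), Measurable g →
          (⨆ n, latWNorm s p ℓ (ε n) (f n)) < ⊤ →
          Filter.Tendsto (fun n => lpNormR2 p ℓ (fun x => Eeps (ε n) (f n) x - g x))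
            Filter.atTop (nhds 0) →
          besovDiffNormR2 s p ℓ g ≤
            ENNReal.ofReal C * ⨆ n, latWNorm s p ℓ (ε n) (f n) := by
  refine ⟨besovConst s ℓ, besovConst_pos s ℓ, fun ε hε hε₀ f g hg _ hlim => ?_⟩
  rw [ENNReal.ofReal_coe_nnreal]
  exact stmt_10_general s ℓ hp (tendsto_nhdsWithin_iff.2 ⟨hε₀, .of_forall fun n => (hε n).1⟩)
    hg.aemeasurable (.of_forall fun n => le_iSup (fun n => latWNorm s p ℓ (ε n) (f n)) n) hlim
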